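/- Let (X, ρ) be a metric space and let γ : [a,b] → X be a continuous mapping. Then γ is absolutely continuous if and only if for every Lipschitz function h : X → ℝ the composition h ∘ γ : [a,b] → ℝ is absolutely continuous. -/

import Mathlib

/-- A mapping `γ` of the segment `[a,b]` into a metric space is absolutely continuous
if for every `ε > 0` there is `δ > 0` such that for every finite collection of pairwise
disjoint intervals `(cᵢ, dᵢ) ⊆ [a,b]` with `∑ (dᵢ - cᵢ) < δ` one has
`∑ dist (γ cᵢ) (γ dᵢ) < ε`. -/
def AbsContOn {X : Type*} [MetricSpace X] (γ : ℝ → X) (a b : ℝ) : Prop :=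
  ∀ ε > (0 : ℝ), ∃ δ > (0 : ℝ), ∀ (n : ℕ) (c d : Fin n → ℝ),
    (∀ i, a ≤ c i ∧ c i < d i ∧ d i ≤ b) →
    (Pairwise fun i j => Disjoint (Set.Ioo (c i) (d i)) (Set.Ioo (c j) (d j))) →
    ∑ i, (d i - c i) < δ →
    ∑ i, dist (γ (c i)) (γ (d i)) < ε

/-! A curve whose composition with every `1`-Lipschitz function is absolutely continuous is
continuous, and all these compositions have bounded variation. Variation is a lower semicontinuous
seminorm, so Baire's theorem in the space of bounded functions bounds `Var (f ∘ γ)` by a constant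
`C` for all `1`-Lipschitz `f` with `|f| ≤ 1`.

Given a subdivision into `n` pieces, cover the trace of the curve by balls of radius `4 r x` such
that the balls of radius `r x ≤ 1 / (n + 1)` are disjoint, with `r x` so small that `ball x (4 r x)`
misses every piece not containing `x`. Then each piece is covered by the balls centred on it and,
being connected, has diameter at most `8 ∑ r x` over those centres. Let `f` be the distance to the
complement of the disjoint balls. Between two centres the curve leaves the balls by connectedness,
so `f ∘ γ` vanishes in between and reaches `r x` at each centre; hence the sum of the radii along
one piece is at most the variation of `f ∘ γ` there, up to an end effect of `1 / (n + 1)`. Summing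
over the pieces yields `Var γ ≤ 8 (C + 1)`.

Finally, with `V` the variation function of `γ`, each `V - dist (γ ·) (γ s)` is increasing to the
right of `s`; since `dist (γ ·) (γ s)` is absolutely continuous, `dist (γ s) (γ t) ≤ ∫ V'` over
`[s, t]`, and an indefinite integral is absolutely continuous. -/

section

open Set MeasureTheory Filter Topology
open scoped ENNReal NNReal BoundedContinuousFunction

section Variation

variable {α E : Type*} [LinearOrder α] [SeminormedAddCommGroup E] (s : Set α)

theorem eVariationOn_sub_le (f g : α → E) :
    eVariationOn (f - g) s ≤ eVariationOn f s + eVariationOn g s := by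
  refine iSup_le fun ⟨n, u, hu, us⟩ => ?_
  calc ∑ i ∈ Finset.range n, edist ((f - g) (u (i + 1))) ((f - g) (u i))
      ≤ ∑ i ∈ Finset.range n, (edist (f (u (i + 1))) (f (u i)) + edist (g (u (i + 1))) (g (u i))) :=
        Finset.sum_le_sum fun i _ => by
          simpa only [Pi.sub_apply, sub_eq_add_neg, edist_neg_neg] using
            edist_add_add_le (f (u (i + 1))) (-g (u (i + 1))) (f (u i)) (-g (u i))
    _ ≤ eVariationOn f s + eVariationOn g s := by
        rw [Finset.sum_add_distrib]
        exact add_le_add (eVariationOn.sum_le hu us) (eVariationOn.sum_le hu us)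

theorem eVariationOn_const_smul [NormedSpace ℝ E] (c : ℝ) (f : α → E) :
    eVariationOn (c • f) s = ‖c‖ₑ * eVariationOn f s := by
  simp only [eVariationOn, ENNReal.mul_iSup, Finset.mul_sum, Pi.smul_apply, edist_smul₀,
    ENNReal.smul_def, smul_eq_mul, enorm_eq_nnnorm]

end Variation

theorem exists_mem_Ioc_mul_lt {δ ε : ℝ} (hδ : 0 < δ) (hε : 0 < ε) (D : ℝ) :
    ∃ θ ∈ Ioc 0 δ, θ * D < ε := by
  have hlim : Tendsto (fun θ : ℝ => θ * D) (𝓝[>] 0) (𝓝 0) := by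
    refine tendsto_nhdsWithin_of_tendsto_nhds ?_
    simpa using (tendsto_id (x := 𝓝 (0 : ℝ))).mul_const D
  have hIoc : ∀ᶠ θ : ℝ in 𝓝[>] 0, θ ∈ Ioc 0 δ := Ioc_mem_nhdsGT hδ
  exact (hIoc.and (hlim.eventually_lt_const hε)).exists

theorem exists_bound_of_lowerSemicontinuousOn_of_convex {E : Type*} [SeminormedAddCommGroup E]
    [NormedSpace ℝ E] {L : Set E} (hL : IsComplete L) (hconv : Convex ℝ L)
    (hbdd : Bornology.IsBounded L) {p : E → ℝ≥0∞} (hp : LowerSemicontinuousOn p L)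
    (hsub : ∀ f g, p (f - g) ≤ p f + p g) (hsmul : ∀ (c : ℝ) f, p (c • f) = ‖c‖ₑ * p f)
    (hfin : ∀ f ∈ L, p f ≠ ∞) :
    ∃ C ≠ ∞, ∀ f ∈ L, p f ≤ C := by
  rcases L.eq_empty_or_nonempty with rfl | hne
  · exact ⟨0, ENNReal.zero_ne_top, by simp⟩
  have := hL.completeSpace_coe
  have := hne.to_subtype
  have hclosed (n : ℕ) : IsClosed {f : L | p f ≤ n} :=
    (lowerSemicontinuous_restrict_iff.2 hp).isClosed_preimage (n : ℝ≥0∞)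
  have hcover : ⋃ n : ℕ, {f : L | p f ≤ n} = univ :=
    eq_univ_of_forall fun f => mem_iUnion.2 <|
      (ENNReal.exists_nat_gt (hfin f f.2)).imp fun _ h => h.le
  obtain ⟨n, f₀, hf₀⟩ := nonempty_interior_of_iUnion_of_closed hclosed hcover
  obtain ⟨ε, hε, hball⟩ := Metric.mem_nhds_iff.1 (mem_interior_iff_mem_nhds.1 hf₀)
  obtain ⟨D, hD⟩ := Metric.isBounded_iff.1 hbdd
  obtain ⟨θ, ⟨hθ₀, hθ₁⟩, hθD⟩ := exists_mem_Ioc_mul_lt zero_lt_one hε D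
  refine ⟨‖θ⁻¹‖ₑ * (n + ‖1 - θ‖ₑ * n), by finiteness, fun f hf => ?_⟩
  have hmem : (1 - θ) • (f₀ : E) + θ • f ∈ L :=
    hconv f₀.2 hf (sub_nonneg.2 hθ₁) hθ₀.le (sub_add_cancel 1 θ)
  have hnear : p ((1 - θ) • (f₀ : E) + θ • f) ≤ n := by
    refine hball (a := ⟨_, hmem⟩) (lt_of_le_of_lt ?_ hθD)
    have : (1 - θ) • (f₀ : E) + θ • f - f₀ = θ • (f - f₀) := by module
    rw [Subtype.dist_eq, dist_eq_norm, this, norm_smul, Real.norm_of_nonneg hθ₀.le, ← dist_eq_norm]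
    exact mul_le_mul_of_nonneg_left (hD hf f₀.2) hθ₀.le
  calc p f = ‖θ⁻¹‖ₑ * p (((1 - θ) • (f₀ : E) + θ • f) - (1 - θ) • (f₀ : E)) := by
        rw [add_sub_cancel_left, ← hsmul, inv_smul_smul₀ hθ₀.ne']
    _ ≤ ‖θ⁻¹‖ₑ * (n + ‖1 - θ‖ₑ * n) := by
        gcongr
        refine (hsub _ _).trans (add_le_add hnear ?_)
        rw [hsmul]
        exact mul_le_mul_right (hball (Metric.mem_ball_self hε)) _

theorem convex_setOf_lipschitzWith {X E : Type*} [PseudoEMetricSpace X] [SeminormedAddCommGroup E]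
    [NormedSpace ℝ E] (K : ℝ≥0) : Convex ℝ {f : X → E | LipschitzWith K f} := by
  intro f hf g hg c d hc hd hcd x y
  calc edist (c • f x + d • g x) (c • f y + d • g y)
      ≤ edist (c • f x) (c • f y) + edist (d • g x) (d • g y) := edist_add_add_le ..
    _ ≤ ‖c‖ₑ * (K * edist x y) + ‖d‖ₑ * (K * edist x y) := by
        simp only [edist_smul₀, ENNReal.smul_def, smul_eq_mul, enorm_eq_nnnorm]
        gcongr
        exacts [hf x y, hg x y]
    _ = K * edist x y := by
        rw [← add_mul, Real.enorm_of_nonneg hc, Real.enorm_of_nonneg hd,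
          ← ENNReal.ofReal_add hc hd, hcd, ENNReal.ofReal_one, one_mul]

theorem lowerSemicontinuous_eVariationOn_comp {α X E : Type*} [LinearOrder α] [TopologicalSpace X]
    [PseudoMetricSpace E] (γ : α → X) (s : Set α) :
    LowerSemicontinuous fun f : X →ᵇ E => eVariationOn (f ∘ γ) s := fun f _ hv =>
  eVariationOn.lowerSemicontinuous_aux
    (fun x _ => (BoundedContinuousFunction.continuous_coe.tendsto f).apply_nhds (γ x)) hv

theorem exists_bound_eVariationOn_comp_of_lipschitzWith {α X : Type*} [LinearOrder α]
    [PseudoMetricSpace X] {γ : α → X} {s : Set α}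
    (h : ∀ f : X →ᵇ ℝ, LipschitzWith 1 f → BoundedVariationOn (f ∘ γ) s) :
    ∃ C ≠ ∞, ∀ f : X →ᵇ ℝ, LipschitzWith 1 f → ‖f‖ ≤ 1 → eVariationOn (f ∘ γ) s ≤ C := by
  let L : Set (X →ᵇ ℝ) := (⇑) ⁻¹' {f : X → ℝ | LipschitzWith 1 f} ∩ Metric.closedBall 0 1
  have hclosed : IsClosed L :=
    ((isClosed_setOfPred_lipschitzWith 1).preimage BoundedContinuousFunction.continuous_coe).inter
      Metric.isClosed_closedBall
  have hconv : Convex ℝ L :=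
    ((convex_setOf_lipschitzWith 1).is_linear_preimage
      ⟨BoundedContinuousFunction.coe_add, BoundedContinuousFunction.coe_smul⟩).inter
      (convex_closedBall 0 1)
  obtain ⟨C, hC, hbound⟩ := exists_bound_of_lowerSemicontinuousOn_of_convex hclosed.isComplete hconv
    (Metric.isBounded_closedBall.subset inter_subset_right)
    ((lowerSemicontinuous_eVariationOn_comp γ s).lowerSemicontinuousOn L)
    (fun f g => eVariationOn_sub_le s (f ∘ γ) (g ∘ γ))
    (fun c f => eVariationOn_const_smul s c (f ∘ γ)) (fun f hf => h f hf.1)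
  exact ⟨C, hC, fun f hf hf' => hbound f ⟨hf, mem_closedBall_zero_iff.2 hf'⟩⟩

theorem ediam_le_sum_ediam_of_isPreconnected {X ι : Type*} [PseudoMetricSpace X] {S : Set X}
    (hS : IsPreconnected S) {s : Finset ι} {B : ι → Set X} (hB : S ⊆ ⋃ i ∈ s, B i) :
    Metric.ediam S ≤ ∑ i ∈ s, Metric.ediam (B i) := by
  refine Metric.ediam_le fun x hx y hy => ?_
  have hlip : LipschitzWith 1 fun z => dist z y := LipschitzWith.dist_left y
  have hsub : Icc 0 (dist x y) ⊆ (fun z => dist z y) '' S :=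
    (hS.image _ hlip.continuous.continuousOn).Icc_subset ⟨y, hy, dist_self y⟩ ⟨x, hx, rfl⟩
  calc edist x y = volume (Icc 0 (dist x y)) := by rw [Real.volume_Icc, sub_zero, edist_dist]
    _ ≤ volume (⋃ i ∈ s, (fun z => dist z y) '' B i) :=
        measure_mono <| hsub.trans <| by simpa only [image_iUnion₂] using image_mono hB
    _ ≤ ∑ i ∈ s, Metric.ediam (B i) := (measure_biUnion_finset_le s _).trans <|
        Finset.sum_le_sum fun i _ => (Real.volume_le_diam _).trans <| by
          simpa using hlip.ediam_image_le (B i)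

theorem exists_finset_pairwiseDisjoint_ball_cover {X : Type*} [PseudoMetricSpace X]
    {K : Set X} (hK : IsCompact K) {r : X → ℝ} (hr : ∀ x ∈ K, 0 < r x) {τ : ℝ} (hτ : 3 < τ) :
    ∃ s : Finset X, ↑s ⊆ K ∧ (s : Set X).PairwiseDisjoint (fun x => Metric.ball x (r x)) ∧
      K ⊆ ⋃ x ∈ s, Metric.ball x (τ * r x) := by
  classical
  obtain ⟨t, htK, ht⟩ := hK.elim_nhds_subcover (fun x => Metric.ball x (r x))
    fun x hx => Metric.ball_mem_nhds x (hr x hx)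
  obtain ⟨R, hR⟩ := (t.finite_toSet.image r).bddAbove
  obtain ⟨u, hut, hdisj, hcover⟩ := Vitali.exists_disjoint_subfamily_covering_enlargement_ball
    (t : Set X) id r R (fun x hx => hR (mem_image_of_mem r hx)) τ hτ
  lift u to Finset X using t.finite_toSet.subset hut
  refine ⟨u, fun x hx => htK x (hut hx), hdisj, fun y hy => ?_⟩
  obtain ⟨x, hx, hyx⟩ := mem_iUnion₂.1 (ht hy)
  obtain ⟨z, hz, hsub⟩ := hcover x hx
  exact mem_biUnion hz (hsub hyx)

theorem exists_radius_disjoint_ball_of_notMem {X ι : Type*} [PseudoMetricSpace X] {S : ι → Set X}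
    (hfin : LocallyFinite S) (hS : ∀ i, IsClosed (S i)) {δ : ℝ} (hδ : 0 < δ) {τ : ℝ} (x : X) :
    ∃ r ∈ Ioc 0 δ, ∀ i, x ∉ S i → Disjoint (Metric.ball x (τ * r)) (S i) := by
  obtain ⟨ε, hε, hball⟩ := Metric.mem_nhds_iff.1 (hfin.iInter_compl_mem_nhds hS x)
  obtain ⟨r, hr, hrε⟩ := exists_mem_Ioc_mul_lt hδ hε τ
  refine ⟨r, hr, fun i hi => disjoint_left.2 fun y hy => ?_⟩
  exact mem_iInter₂.1 (hball (Metric.ball_subset_ball (mul_comm τ r ▸ hrε.le) hy)) i hi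

theorem subset_of_isPreconnected_of_subset_biUnion {X ι : Type*} [TopologicalSpace X] {K : Set X}
    (hK : IsPreconnected K) {s : Set ι} {U : ι → Set X} (hU : ∀ i ∈ s, IsOpen (U i))
    (hdisj : s.PairwiseDisjoint U) (hKU : K ⊆ ⋃ i ∈ s, U i) {i : ι} (hi : i ∈ s)
    (hne : (K ∩ U i).Nonempty) : K ⊆ U i := by
  refine hK.subset_left_of_subset_union (hU i hi)
    (isOpen_biUnion (s := s \ {i}) (f := U) fun j hj => hU j hj.1)
    (disjoint_iUnion₂_right.2 fun j hj => hdisj hi hj.1 (Ne.symm hj.2)) (hKU.trans ?_) hne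
  rw [← biUnion_insert, insert_sdiff_singleton, insert_eq_of_mem hi]

/-- The distance to `A` capped at `1`, as a bounded continuous function, so that it is a test
function in the uniform bound on variations. On `A = ∅` it is `0`, as `Metric.infDist` is there. -/
noncomputable def truncInfDist {X : Type*} [PseudoMetricSpace X] (A : Set X) : X →ᵇ ℝ :=
  BoundedContinuousFunction.ofNormedAddCommGroup (fun z => min (Metric.infDist z A) 1)
    ((Metric.continuous_infDist_pt A).min continuous_const) 1 fun z => by
      rw [Real.norm_of_nonneg (le_min Metric.infDist_nonneg zero_le_one)]
      exact min_le_right _ _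

section TruncInfDist

variable {X : Type*} [PseudoMetricSpace X] (A : Set X)

theorem lipschitzWith_truncInfDist : LipschitzWith 1 (truncInfDist A) :=
  (Metric.lipschitz_infDist_pt A).min_const 1

theorem norm_truncInfDist_le_one : ‖truncInfDist A‖ ≤ 1 :=
  BoundedContinuousFunction.norm_ofNormedAddCommGroup_le _ zero_le_one _

variable {A} {x : X}

theorem truncInfDist_eq_zero (hx : x ∈ A) : truncInfDist A x = 0 := by
  change min (Metric.infDist x A) 1 = 0
  rw [Metric.infDist_zero_of_mem hx, min_eq_left zero_le_one]

theorem le_truncInfDist (hA : A.Nonempty) {r : ℝ} (hr : r ≤ 1)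
    (hdisj : Disjoint (Metric.ball x r) A) : r ≤ truncInfDist A x :=
  le_min ((Metric.le_infDist hA).2 fun _ hy => not_lt.1 fun hlt =>
    disjoint_left.1 hdisj (Metric.mem_ball'.2 hlt) hy) hr

end TruncInfDist

-- The summand `M` pays for the earliest point of `T`, which has no predecessor.
theorem sum_le_eVariationOn_Icc_add {α E : Type*} [LinearOrder α] [PseudoEMetricSpace E]
    {f : α → E} {w : α → ℝ≥0∞} {M : ℝ≥0∞} {T : Finset α} {p q : α} (hT : ↑T ⊆ Icc p q)
    (hM : ∀ t ∈ T, w t ≤ M)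
    (hw : ∀ t ∈ T, ∀ t' ∈ T, t < t' → w t' ≤ eVariationOn f (Icc t t')) :
    ∑ t ∈ T, w t ≤ eVariationOn f (Icc p q) + M := by
  induction T using Finset.induction_on_max generalizing q with
  | empty => simp
  | insert t T hlt ih =>
    rw [Finset.sum_insert fun h => (hlt t h).false]
    rcases T.eq_empty_or_nonempty with rfl | hne
    · simpa using (hM t (by simp)).trans le_add_self
    set m := T.max' hne
    have hm : m ∈ T := T.max'_mem hne
    have hTm : ↑T ⊆ Icc p m := fun x hx =>
      ⟨(hT (Finset.mem_insert_of_mem hx)).1, T.le_max' x hx⟩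
    have hlast : w t ≤ eVariationOn f (Icc m t) :=
      hw m (Finset.mem_insert_of_mem hm) t (Finset.mem_insert_self t T) (hlt m hm)
    have hinit : ∑ t ∈ T, w t ≤ eVariationOn f (Icc p m) + M :=
      ih hTm (fun x hx => hM x (Finset.mem_insert_of_mem hx)) fun x hx y hy =>
        hw x (Finset.mem_insert_of_mem hx) y (Finset.mem_insert_of_mem hy)
    have hsplit :
        eVariationOn f (Icc p m) + eVariationOn f (Icc m t) = eVariationOn f (Icc p t) := by
      simpa using eVariationOn.Icc_add_Icc f (s := univ) (hTm hm).1 (hlt m hm).le (mem_univ m)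
    calc w t + ∑ t ∈ T, w t
        ≤ eVariationOn f (Icc m t) + (eVariationOn f (Icc p m) + M) := add_le_add hlast hinit
      _ = eVariationOn f (Icc p t) + M := by rw [← hsplit]; ring
      _ ≤ eVariationOn f (Icc p q) + M := by
        gcongr
        exact eVariationOn.mono f (Icc_subset_Icc_right (hT (Finset.mem_insert_self t T)).2)

section Balls

variable {α X : Type*} [ConditionallyCompleteLinearOrder α] [TopologicalSpace α] [OrderTopology α]
  [DenselyOrdered α] [PseudoMetricSpace X] {γ : α → X} {p q : α} {s : Finset X} {r : X → ℝ}

theorem ofReal_le_eVariationOn_truncInfDist_comp (hpq : p ≤ q) (hγ : ContinuousOn γ (Icc p q))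
    (hdisj : (s : Set X).PairwiseDisjoint fun x => Metric.ball x (r x))
    (hr : ∀ x ∈ s, r x ∈ Ioc 0 1) (hp : γ p ∈ s) (hq : γ q ∈ s) (hne : γ p ≠ γ q) :
    ENNReal.ofReal (r (γ q)) ≤
      eVariationOn (truncInfDist (⋃ x ∈ s, Metric.ball x (r x))ᶜ ∘ γ) (Icc p q) := by
  set A := (⋃ x ∈ s, Metric.ball x (r x))ᶜ
  obtain ⟨t, ht, htA⟩ : ∃ t ∈ Icc p q, γ t ∈ A := by
    by_contra! hcontra
    have hsub : γ '' Icc p q ⊆ Metric.ball (γ p) (r (γ p)) :=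
      subset_of_isPreconnected_of_subset_biUnion (isPreconnected_Icc.image γ hγ)
        (fun _ _ => Metric.isOpen_ball) hdisj
        (image_subset_iff.2 fun t ht => not_not.1 (hcontra t ht)) hp
        ⟨γ p, mem_image_of_mem γ (left_mem_Icc.2 hpq), Metric.mem_ball_self (hr _ hp).1⟩
    exact disjoint_left.1 (hdisj hp hq hne) (hsub (mem_image_of_mem γ (right_mem_Icc.2 hpq)))
      (Metric.mem_ball_self (hr _ hq).1)
  have hball : Disjoint (Metric.ball (γ q) (r (γ q))) A :=
    disjoint_compl_right_iff_subset.2 (subset_biUnion_of_mem (u := fun x => Metric.ball x (r x)) hq)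
  calc ENNReal.ofReal (r (γ q)) ≤ ENNReal.ofReal (dist (truncInfDist A (γ q)) 0) := by
        rw [Real.dist_0_eq_abs]
        exact ENNReal.ofReal_le_ofReal
          ((le_truncInfDist ⟨γ t, htA⟩ (hr _ hq).2 hball).trans (le_abs_self _))
    _ = edist (truncInfDist A (γ q)) (truncInfDist A (γ t)) := by
        rw [truncInfDist_eq_zero htA, edist_dist]
    _ ≤ eVariationOn (truncInfDist A ∘ γ) (Icc p q) :=
        eVariationOn.edist_le (truncInfDist A ∘ γ) (right_mem_Icc.2 hpq) ht

theorem sum_ofReal_le_eVariationOn_truncInfDist_comp_add (hγ : ContinuousOn γ (Icc p q))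
    (hdisj : (s : Set X).PairwiseDisjoint fun x => Metric.ball x (r x)) {δ : ℝ} (hδ : δ ≤ 1)
    (hr : ∀ x ∈ s, r x ∈ Ioc 0 δ) {s' : Finset X} (hs : s' ⊆ s) (hs' : ↑s' ⊆ γ '' Icc p q) :
    ∑ x ∈ s', ENNReal.ofReal (r x) ≤
      eVariationOn (truncInfDist (⋃ x ∈ s, Metric.ball x (r x))ᶜ ∘ γ) (Icc p q) +
        ENNReal.ofReal δ := by
  classical
  choose! τ hτ hγτ using hs'
  have hinj : InjOn τ s' := LeftInvOn.injOn (f₁' := γ) hγτ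
  set f := truncInfDist (⋃ x ∈ s, Metric.ball x (r x))ᶜ
  calc ∑ x ∈ s', ENNReal.ofReal (r x) = ∑ t ∈ s'.image τ, ENNReal.ofReal (r (γ t)) := by
        rw [Finset.sum_image hinj]
        exact Finset.sum_congr rfl fun x hx => by rw [hγτ hx]
    _ ≤ eVariationOn (f ∘ γ) (Icc p q) + ENNReal.ofReal δ := by
        refine sum_le_eVariationOn_Icc_add ?_ ?_ ?_
        · simpa [subset_def] using fun x hx => hτ hx
        · simp only [Finset.forall_mem_image]
          intro x hx
          rw [hγτ hx]
          exact ENNReal.ofReal_le_ofReal (hr x (hs hx)).2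
        · simp only [Finset.forall_mem_image]
          intro x hx y hy hlt
          refine ofReal_le_eVariationOn_truncInfDist_comp hlt.le
            (hγ.mono (Icc_subset_Icc (hτ hx).1 (hτ hy).2)) hdisj
            (fun z hz => Ioc_subset_Ioc_right hδ (hr z hz)) ?_ ?_ ?_
          · rw [hγτ hx]
            exact hs hx
          · rw [hγτ hy]
            exact hs hy
          · rw [hγτ hx, hγτ hy]
            rintro rfl
            exact hlt.false

theorem edist_le_eVariationOn_truncInfDist_comp_add (hpq : p ≤ q) (hγ : ContinuousOn γ (Icc p q))
    (hdisj : (s : Set X).PairwiseDisjoint fun x => Metric.ball x (r x)) {δ : ℝ} (hδ : δ ≤ 1)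
    (hr : ∀ x ∈ s, r x ∈ Ioc 0 δ) (hcover : γ '' Icc p q ⊆ ⋃ x ∈ s, Metric.ball x (4 * r x))
    (hfar : ∀ x ∈ s, x ∉ γ '' Icc p q → Disjoint (Metric.ball x (4 * r x)) (γ '' Icc p q)) :
    edist (γ p) (γ q) ≤
      8 * (eVariationOn (truncInfDist (⋃ x ∈ s, Metric.ball x (r x))ᶜ ∘ γ) (Icc p q) +
        ENNReal.ofReal δ) := by
  classical
  set s' := s.filter (· ∈ γ '' Icc p q)
  have hcover' : γ '' Icc p q ⊆ ⋃ x ∈ s', Metric.ball x (4 * r x) := fun y hy => by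
    obtain ⟨x, hx, hyx⟩ := mem_iUnion₂.1 (hcover hy)
    have hxS : x ∈ γ '' Icc p q := by_contra fun h => disjoint_left.1 (hfar x hx h) hyx hy
    exact mem_biUnion (Finset.mem_filter.2 ⟨hx, hxS⟩) hyx
  have hball (x : X) (_ : x ∈ s') :
      Metric.ediam (Metric.ball x (4 * r x)) ≤ 8 * ENNReal.ofReal (r x) := by
    rw [← Metric.eball_ofReal]
    refine Metric.ediam_eball_le.trans_eq ?_
    rw [ENNReal.ofReal_mul (by norm_num), ENNReal.ofReal_ofNat, ← mul_assoc]
    norm_num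
  calc edist (γ p) (γ q) ≤ Metric.ediam (γ '' Icc p q) :=
        Metric.edist_le_ediam_of_mem (mem_image_of_mem γ (left_mem_Icc.2 hpq))
          (mem_image_of_mem γ (right_mem_Icc.2 hpq))
    _ ≤ ∑ x ∈ s', Metric.ediam (Metric.ball x (4 * r x)) :=
        ediam_le_sum_ediam_of_isPreconnected (isPreconnected_Icc.image γ hγ) hcover'
    _ ≤ 8 * ∑ x ∈ s', ENNReal.ofReal (r x) := by
        rw [Finset.mul_sum]
        exact Finset.sum_le_sum hball
    _ ≤ _ := by
        gcongr
        exact sum_ofReal_le_eVariationOn_truncInfDist_comp_add hγ hdisj hδ hr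
          (Finset.filter_subset _ _) fun x hx => (Finset.mem_filter.1 hx).2

end Balls

theorem eVariationOn_le_of_forall_lipschitzWith {α X : Type*}
    [ConditionallyCompleteLinearOrder α] [TopologicalSpace α] [OrderTopology α] [DenselyOrdered α]
    [MetricSpace X] {γ : α → X} {a b : α} (hγ : ContinuousOn γ (Icc a b)) {C : ℝ≥0∞}
    (h : ∀ f : X →ᵇ ℝ, LipschitzWith 1 f → ‖f‖ ≤ 1 → eVariationOn (f ∘ γ) (Icc a b) ≤ C) :
    eVariationOn γ (Icc a b) ≤ 8 * (C + 1) := by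
  refine iSup_le fun ⟨n, u, hu, hmem⟩ => ?_
  have hpiece (j : ℕ) : Icc (u j) (u (j + 1)) ⊆ Icc a b := Icc_subset_Icc (hmem _).1 (hmem _).2
  let δ : ℝ := (n + 1 : ℝ)⁻¹
  have hδ₁ : δ ≤ 1 := inv_le_one_of_one_le₀ (by simp)
  let S : Fin n → Set X := fun j => γ '' Icc (u j) (u (j + 1))
  have hS (j : Fin n) : IsClosed (S j) :=
    (isCompact_Icc.image_of_continuousOn (hγ.mono (hpiece j))).isClosed
  choose r hr hfar using exists_radius_disjoint_ball_of_notMem (locallyFinite_of_finite S) hS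
    (show 0 < δ by positivity) (τ := 4)
  obtain ⟨s, -, hdisj, hcover⟩ := exists_finset_pairwiseDisjoint_ball_cover
    (isCompact_Icc.image_of_continuousOn hγ) (fun x _ => (hr x).1) (by norm_num : (3 : ℝ) < 4)
  set f := truncInfDist (⋃ x ∈ s, Metric.ball x (r x))ᶜ
  have hstep (j : ℕ) (hj : j ∈ Finset.range n) : edist (γ (u (j + 1))) (γ (u j)) ≤
      8 * (eVariationOn (f ∘ γ) (Icc (u j) (u (j + 1))) + ENNReal.ofReal δ) := by
    rw [edist_comm]
    exact edist_le_eVariationOn_truncInfDist_comp_add (hu j.le_succ) (hγ.mono (hpiece j)) hdisj hδ₁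
      (fun x _ => hr x) ((image_mono (hpiece j)).trans hcover)
      fun x _ => hfar x ⟨j, Finset.mem_range.1 hj⟩
  have hδ : n * ENNReal.ofReal δ ≤ 1 := by
    rw [← ENNReal.ofReal_natCast, ← ENNReal.ofReal_mul n.cast_nonneg, ← ENNReal.ofReal_one]
    exact ENNReal.ofReal_le_ofReal (mul_inv_le_one_of_le₀ (by simp) (by positivity))
  calc ∑ j ∈ Finset.range n, edist (γ (u (j + 1))) (γ (u j))
      ≤ 8 * (eVariationOn (f ∘ γ) (Icc (u 0) (u n)) + n * ENNReal.ofReal δ) := by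
        refine (Finset.sum_le_sum hstep).trans_eq ?_
        rw [← Finset.mul_sum, Finset.sum_add_distrib, eVariationOn.sum' _ hu, Finset.sum_const,
          Finset.card_range, nsmul_eq_mul]
    _ ≤ 8 * (C + 1) := by
        gcongr
        exact (eVariationOn.mono _ (Icc_subset_Icc (hmem 0).1 (hmem n).2)).trans
          (h f (lipschitzWith_truncInfDist _) (norm_truncInfDist_le_one _))

theorem absolutelyContinuousOnInterval_of_dist_le {X Y : Type*} [PseudoMetricSpace X]
    [PseudoMetricSpace Y] {f : ℝ → X} {g : ℝ → Y} {a b K : ℝ}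
    (hg : AbsolutelyContinuousOnInterval g a b)
    (h : ∀ s ∈ uIcc a b, ∀ t ∈ uIcc a b, dist (f s) (f t) ≤ K * dist (g s) (g t)) :
    AbsolutelyContinuousOnInterval f a b := by
  rw [AbsolutelyContinuousOnInterval] at hg ⊢
  refine squeeze_zero' (.of_forall fun E => Finset.sum_nonneg fun i _ => dist_nonneg) ?_
    (by simpa only [mul_zero] using hg.const_mul K)
  refine eventually_inf_principal.2 (.of_forall fun E hE => ?_)
  rw [Finset.mul_sum]
  exact Finset.sum_le_sum fun i hi => h _ (hE.1 i hi).1 _ (hE.1 i hi).2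

theorem continuousOn_of_forall_dist {α X : Type*} [TopologicalSpace α] [PseudoMetricSpace X]
    {γ : α → X} {s : Set α} (h : ∀ x, ContinuousOn (fun t => dist (γ t) x) s) : ContinuousOn γ s :=
  fun t ht => tendsto_iff_dist_tendsto_zero.2 <| by simpa using (h (γ t) t ht).tendsto

theorem sub_le_integral_deriv_of_monotoneOn_sub {f V : ℝ → ℝ} {a b : ℝ} (hab : a ≤ b)
    (hf : AbsolutelyContinuousOnInterval f a b) (hV : MonotoneOn V (Icc a b))
    (hVf : MonotoneOn (V - f) (Icc a b)) : f b - f a ≤ ∫ x in a..b, deriv V x := by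
  have hle : deriv f ≤ᵐ[volume.restrict (Icc a b)] deriv V := by
    rw [← Measure.restrict_congr_set Ioo_ae_eq_Icc]
    filter_upwards [ae_restrict_mem measurableSet_Ioo, ae_restrict_of_ae hf.ae_differentiableAt,
      ae_restrict_of_ae hV.ae_differentiableWithinAt_of_mem] with x hx hfx hVx
    have hx' : Icc a b ∈ 𝓝 x := Icc_mem_nhds hx.1 hx.2
    have hmem : x ∈ Icc a b := Ioo_subset_Icc_self hx
    have hnonneg : 0 ≤ deriv (V - f) x := by
      rw [← derivWithin_of_mem_nhds hx']
      exact hVf.derivWithin_nonneg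
    rwa [deriv_sub ((hVx hmem).differentiableAt hx') (hfx (uIcc_of_le hab ▸ hmem)),
      sub_nonneg] at hnonneg
  rw [← hf.integral_deriv_eq_sub]
  exact intervalIntegral.integral_mono_ae_restrict hab hf.intervalIntegrable_deriv
    (MonotoneOn.intervalIntegrable_deriv (uIcc_of_le hab ▸ hV)) hle

theorem dist_le_variationOnFromTo_sub {α X : Type*} [LinearOrder α] [PseudoMetricSpace X]
    {γ : α → X} {S : Set α} (hγ : LocallyBoundedVariationOn γ S) {a s t : α} (ha : a ∈ S)
    (hs : s ∈ S) (ht : t ∈ S) (hst : s ≤ t) :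
    dist (γ s) (γ t) ≤ variationOnFromTo γ S a t - variationOnFromTo γ S a s := by
  rw [← variationOnFromTo.add hγ ha hs ht, add_sub_cancel_left, variationOnFromTo.eq_of_le _ _ hst]
  exact (hγ s t hs ht).dist_le ⟨hs, left_mem_Icc.2 hst⟩ ⟨ht, right_mem_Icc.2 hst⟩

theorem dist_le_integral_deriv_variationOnFromTo {X : Type*} [PseudoMetricSpace X] {γ : ℝ → X}
    {a b s t : ℝ} (hγ : BoundedVariationOn γ (Icc a b)) (hst : s ≤ t) (has : a ≤ s) (htb : t ≤ b)
    (hs : AbsolutelyContinuousOnInterval (fun x => dist (γ x) (γ s)) s t) :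
    dist (γ s) (γ t) ≤ ∫ x in s..t, deriv (variationOnFromTo γ (Icc a b) a) x := by
  have hsub : Icc s t ⊆ Icc a b := Icc_subset_Icc has htb
  have hloc := hγ.locallyBoundedVariationOn
  have ha : a ∈ Icc a b := left_mem_Icc.2 (has.trans (hst.trans htb))
  have hmono : MonotoneOn (variationOnFromTo γ (Icc a b) a - fun x => dist (γ x) (γ s))
      (Icc s t) := fun x hx y hy hxy => by
    have hV := dist_le_variationOnFromTo_sub hloc ha (hsub hx) (hsub hy) hxy
    have htri := dist_triangle_left (γ y) (γ s) (γ x)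
    simp only [Pi.sub_apply]
    linarith
  simpa [dist_comm] using sub_le_integral_deriv_of_monotoneOn_sub hst hs
    ((variationOnFromTo.monotoneOn hloc ha).mono hsub) hmono

theorem absolutelyContinuousOnInterval_of_boundedVariationOn_of_forall_dist {X : Type*}
    [PseudoMetricSpace X] {γ : ℝ → X} {a b : ℝ} (hγ : BoundedVariationOn γ (uIcc a b))
    (hdist : ∀ x, AbsolutelyContinuousOnInterval (fun t => dist (γ t) x) a b) :
    AbsolutelyContinuousOnInterval γ a b := by
  wlog hab : a ≤ b generalizing a b
  · exact (this (uIcc_comm a b ▸ hγ) (fun x => (hdist x).symm) (le_of_not_ge hab)).symm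
  set V := variationOnFromTo γ (uIcc a b) a
  have hint : IntervalIntegrable (deriv V) volume a b :=
    (variationOnFromTo.monotoneOn hγ.locallyBoundedVariationOn
      left_mem_uIcc).intervalIntegrable_deriv
  refine absolutelyContinuousOnInterval_of_dist_le (K := 1)
    (hint.absolutelyContinuousOnInterval_intervalIntegral left_mem_uIcc) fun s hs t ht => ?_
  wlog hst : s ≤ t generalizing s t
  · rw [dist_comm, dist_comm (∫ _ in a..s, _)]
    exact this t ht s hs (le_of_not_ge hst)
  have hint' {c : ℝ} (hc : c ∈ uIcc a b) : IntervalIntegrable (deriv V) volume a c :=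
    hint.mono_set (uIcc_subset_uIcc_left hc)
  rw [one_mul, dist_comm (∫ _ in a..s, _), Real.dist_eq,
    intervalIntegral.integral_interval_sub_left (hint' ht) (hint' hs)]
  refine le_trans ?_ (le_abs_self _)
  have hmono := (hdist (γ s)).mono (uIcc_subset_uIcc hs ht)
  simp only [V]
  rw [uIcc_of_le hab] at hs ht hγ ⊢
  exact dist_le_integral_deriv_variationOnFromTo hγ hst hs.1 ht.2 hmono

theorem dist_comp_min_max {α X : Type*} [LinearOrder α] [PseudoMetricSpace X] (γ : α → X)
    (x y : α) :
    dist (γ (min x y)) (γ (max x y)) = dist (γ x) (γ y) := by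
  rcases le_total x y with h | h
  · rw [min_eq_left h, max_eq_right h]
  · rw [min_eq_right h, max_eq_left h, dist_comm]

section AbsContOn

variable {X : Type*} [MetricSpace X] {γ : ℝ → X} {a b : ℝ}

theorem AbsContOn.exists_forall_finset (h : AbsContOn γ a b) {ε : ℝ} (hε : 0 < ε) (ι : Type*) :
    ∃ δ > 0, ∀ (s : Finset ι) (c d : ι → ℝ), (∀ i ∈ s, a ≤ c i ∧ c i < d i ∧ d i ≤ b) →
      (s : Set ι).PairwiseDisjoint (fun i => Ioo (c i) (d i)) →
      ∑ i ∈ s, (d i - c i) < δ → ∑ i ∈ s, dist (γ (c i)) (γ (d i)) < ε := by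
  obtain ⟨δ, hδ, H⟩ := h ε hε
  refine ⟨δ, hδ, fun s c d hcd hdisj hlt => ?_⟩
  let e : Fin s.card ≃ s := s.equivFin.symm
  have hsum (F : ι → ℝ) : ∑ k, F (e k) = ∑ i ∈ s, F i :=
    (e.sum_comp fun i : s => F i).trans (Finset.sum_coe_sort s F)
  rw [← hsum fun i => d i - c i] at hlt
  rw [← hsum fun i => dist (γ (c i)) (γ (d i))]
  exact H s.card (fun k => c (e k)) (fun k => d (e k)) (fun k => hcd _ (e k).2)
    (fun k l hkl => hdisj (e k).2 (e l).2 fun h => hkl (e.injective (Subtype.ext h))) hlt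

theorem AbsContOn.absolutelyContinuousOnInterval (hab : a ≤ b) (h : AbsContOn γ a b) :
    AbsolutelyContinuousOnInterval γ a b := by
  refine (absolutelyContinuousOnInterval_iff γ a b).2 fun ε hε => ?_
  obtain ⟨δ, hδ, H⟩ := h.exists_forall_finset hε ℕ
  refine ⟨δ, hδ, fun ⟨n, I⟩ ⟨hI, hdisj⟩ hlt => ?_⟩
  simp only [uIcc_of_le hab] at hI hdisj hlt ⊢
  let s := (Finset.range n).filter fun i => (I i).1 ≠ (I i).2
  have hs : s ⊆ Finset.range n := Finset.filter_subset _ _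
  have hsum (F : ℝ → ℝ → ℝ) (hF : ∀ x, F x x = 0) :
      ∑ i ∈ s, F (I i).1 (I i).2 = ∑ i ∈ Finset.range n, F (I i).1 (I i).2 :=
    Finset.sum_filter_of_ne fun i _ hne heq => hne (by rw [heq, hF])
  have hlen (i : ℕ) : max (I i).1 (I i).2 - min (I i).1 (I i).2 = dist (I i).1 (I i).2 := by
    rw [max_sub_min_eq_abs', Real.dist_eq]
  have := H s (fun i => min (I i).1 (I i).2) (fun i => max (I i).1 (I i).2)
    (fun i hi => ⟨le_min (hI i (hs hi)).1.1 (hI i (hs hi)).2.1,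
      min_lt_max.2 (Finset.mem_filter.1 hi).2, max_le (hI i (hs hi)).1.2 (hI i (hs hi)).2.2⟩)
    ((hdisj.subset hs).mono fun i => Ioo_subset_Ioc_self)
    (by simpa only [hlen, hsum dist dist_self] using hlt)
  simpa only [dist_comp_min_max, hsum (fun x y => dist (γ x) (γ y)) fun _ => dist_self _] using this

theorem absContOn_of_absolutelyContinuousOnInterval (hab : a ≤ b)
    (h : AbsolutelyContinuousOnInterval γ a b) : AbsContOn γ a b := by
  intro ε hε
  obtain ⟨δ, hδ, H⟩ := (absolutelyContinuousOnInterval_iff γ a b).1 h ε hε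
  refine ⟨δ, hδ, fun n c d hcd hdisj hlt => ?_⟩
  let I (i : ℕ) : ℝ × ℝ := if hi : i < n then (c ⟨i, hi⟩, d ⟨i, hi⟩) else (0, 0)
  have hI (i : Fin n) : I i = (c i, d i) := dif_pos i.2
  have hmem : (n, I) ∈ AbsolutelyContinuousOnInterval.disjWithin a b := by
    refine ⟨fun i hi => ?_, fun i hi j hj hij => ?_⟩
    · lift i to Fin n using Finset.mem_range.1 hi
      obtain ⟨hac, hlt, hdb⟩ := hcd i
      simp only [hI, uIcc_of_le hab]
      exact ⟨⟨hac, hlt.le.trans hdb⟩, ⟨hac.trans hlt.le, hdb⟩⟩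
    · lift i to Fin n using Finset.mem_range.1 hi
      lift j to Fin n using Finset.mem_range.1 hj
      simp only [Function.onFun, hI, uIoc_of_le (hcd _).2.1.le, Ioc_disjoint_Ioc]
      exact Ioo_disjoint_Ioo.1 (hdisj fun h => hij (congrArg _ h))
  have hdist (i : Fin n) : dist (c i) (d i) = d i - c i := by
    rw [dist_comm, Real.dist_eq, abs_of_pos (sub_pos.2 (hcd i).2.1)]
  simpa [Finset.sum_range, hI] using H _ hmem (by simpa [Finset.sum_range, hI, hdist] using hlt)

theorem absContOn_iff_absolutelyContinuousOnInterval (hab : a ≤ b) :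
    AbsContOn γ a b ↔ AbsolutelyContinuousOnInterval γ a b :=
  ⟨AbsContOn.absolutelyContinuousOnInterval hab, absContOn_of_absolutelyContinuousOnInterval hab⟩

theorem absContOn_of_lt (hba : b < a) : AbsContOn γ a b := by
  refine fun ε hε => ⟨1, one_pos, fun n c d hcd _ _ => ?_⟩
  have : IsEmpty (Fin n) := ⟨fun i =>
    hba.not_ge ((hcd i).1.trans ((hcd i).2.1.le.trans (hcd i).2.2))⟩
  simpa using hε

end AbsContOn

theorem absolutelyContinuousOnInterval_of_forall_lipschitzWith_comp {X : Type*} [MetricSpace X]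
    {γ : ℝ → X} {a b : ℝ}
    (h : ∀ f : X → ℝ, LipschitzWith 1 f → AbsolutelyContinuousOnInterval (f ∘ γ) a b) :
    AbsolutelyContinuousOnInterval γ a b := by
  have hdist (x : X) : AbsolutelyContinuousOnInterval (fun t => dist (γ t) x) a b :=
    h (fun y => dist y x) (LipschitzWith.dist_left x)
  have hcont : ContinuousOn γ (uIcc a b) :=
    continuousOn_of_forall_dist fun x => (hdist x).continuousOn
  obtain ⟨C, hC, hbound⟩ := exists_bound_eVariationOn_comp_of_lipschitzWith (γ := γ)
    fun f hf => (h f hf).boundedVariationOn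
  have hvar : eVariationOn γ (uIcc a b) ≤ 8 * (C + 1) :=
    eVariationOn_le_of_forall_lipschitzWith hcont hbound
  exact absolutelyContinuousOnInterval_of_boundedVariationOn_of_forall_dist
    (ne_top_of_le_ne_top (by finiteness) hvar) hdist

theorem absolutelyContinuous_iff_comp_lipschitz_general {X : Type*} [MetricSpace X]
    (a b : ℝ) (γ : ℝ → X) :
    AbsContOn γ a b ↔
      ∀ h : X → ℝ, (∃ L : ℝ, 0 ≤ L ∧ ∀ x y : X, |h x - h y| ≤ L * dist x y) →
        AbsContOn (h ∘ γ) a b := by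
  rcases lt_or_ge b a with hba | hab
  · exact iff_of_true (absContOn_of_lt hba) fun h _ => absContOn_of_lt hba
  simp only [absContOn_iff_absolutelyContinuousOnInterval hab]
  refine ⟨fun hγ h ⟨L, _, hL⟩ => ?_, fun H => ?_⟩
  · exact absolutelyContinuousOnInterval_of_dist_le hγ fun s _ t _ => hL (γ s) (γ t)
  · exact absolutelyContinuousOnInterval_of_forall_lipschitzWith_comp fun f hf =>
      H f ⟨1, zero_le_one, hf.dist_le_mul⟩

end

/-- A continuous mapping `γ : [a,b] → X` is absolutely continuous if and only if
for every Lipschitz function `h : X → ℝ` the composition `h ∘ γ` is absolutely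
continuous. -/
theorem absolutelyContinuous_iff_comp_lipschitz {X : Type*} [MetricSpace X]
    (a b : ℝ) (γ : ℝ → X) (hγ : ContinuousOn γ (Set.Icc a b)) :
    AbsContOn γ a b ↔
      ∀ h : X → ℝ, (∃ L : ℝ, 0 ≤ L ∧ ∀ x y : X, |h x - h y| ≤ L * dist x y) →
        AbsContOn (h ∘ γ) a b := by
  exact absolutelyContinuous_iff_comp_lipschitz_general a b γ
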